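/- arXiv:math/0610877 — 5 statements merged into one kernel-verified Lean document; each statement's English description precedes it below -/
import Mathlib

section
/- Let P : V ⇉ W and Q : W ⇉ Y be linear relations between finite-dimensional complex vector spaces such that Ker Q ∩ Indef P = 0 and Im P + Dom Q = W. Then dim(Q∘P) = dim P + dim Q − dim W. (Proposition 4.1(a).) -/
open Submodule Module

/-- The kernel of a linear relation `P : V ⇉ W`: all `v` with `(v, 0) ∈ P`. -/
def relKer {V W : Type*} [AddCommGroup V] [Module ℂ V] [AddCommGroup W] [Module ℂ W]
    (P : Submodule ℂ (V × W)) : Submodule ℂ V :=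
  P.comap (LinearMap.inl ℂ V W)

/-- The indefiniteness of a linear relation `P : V ⇉ W`: all `w` with `(0, w) ∈ P`. -/
def relIndef {V W : Type*} [AddCommGroup V] [Module ℂ V] [AddCommGroup W] [Module ℂ W]
    (P : Submodule ℂ (V × W)) : Submodule ℂ W :=
  P.comap (LinearMap.inr ℂ V W)

/-- The domain of a linear relation `P : V ⇉ W`. -/
def relDom {V W : Type*} [AddCommGroup V] [Module ℂ V] [AddCommGroup W] [Module ℂ W]
    (P : Submodule ℂ (V × W)) : Submodule ℂ V :=
  P.map (LinearMap.fst ℂ V W)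

/-- The image of a linear relation `P : V ⇉ W`. -/
def relIm {V W : Type*} [AddCommGroup V] [Module ℂ V] [AddCommGroup W] [Module ℂ W]
    (P : Submodule ℂ (V × W)) : Submodule ℂ W :=
  P.map (LinearMap.snd ℂ V W)

/-- The composition `Q∘P : V ⇉ Y` of linear relations `P : V ⇉ W` and `Q : W ⇉ Y`. -/
def relComp {V W Y : Type*} [AddCommGroup V] [Module ℂ V] [AddCommGroup W] [Module ℂ W]
    [AddCommGroup Y] [Module ℂ Y]
    (P : Submodule ℂ (V × W)) (Q : Submodule ℂ (W × Y)) : Submodule ℂ (V × Y) where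
  carrier := {p | ∃ w : W, (p.1, w) ∈ P ∧ (w, p.2) ∈ Q}
  add_mem' := by
    rintro ⟨a, b⟩ ⟨c, d⟩ ⟨w₁, h₁, h₂⟩ ⟨w₂, h₃, h₄⟩
    exact ⟨w₁ + w₂, P.add_mem h₁ h₃, Q.add_mem h₂ h₄⟩
  zero_mem' := ⟨0, P.zero_mem, Q.zero_mem⟩
  smul_mem' := by
    rintro c ⟨a, b⟩ ⟨w, h₁, h₂⟩
    exact ⟨c • w, P.smul_mem c h₁, Q.smul_mem c h₂⟩

/-- **Proposition 4.1(a).** If `P : V ⇉ W` and `Q : W ⇉ Y` are linear relations between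
finite-dimensional complex vector spaces with `Ker Q ∩ Indef P = 0` and `Im P + Dom Q = W`,
then `dim (Q∘P) = dim P + dim Q - dim W`. -/
theorem dim_relComp {V W Y : Type*}
    [AddCommGroup V] [Module ℂ V] [FiniteDimensional ℂ V]
    [AddCommGroup W] [Module ℂ W] [FiniteDimensional ℂ W]
    [AddCommGroup Y] [Module ℂ Y] [FiniteDimensional ℂ Y]
    (P : Submodule ℂ (V × W)) (Q : Submodule ℂ (W × Y))
    (hker : relKer Q ⊓ relIndef P = ⊥)
    (hdom : relIm P ⊔ relDom Q = ⊤) :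
    Module.finrank ℂ (relComp P Q) + Module.finrank ℂ W
      = Module.finrank ℂ P + Module.finrank ℂ Q := by
  let f : (P × Q) →ₗ[ℂ] W :=
    ((LinearMap.snd ℂ V W).comp P.subtype).comp (LinearMap.fst ℂ P Q)
      - ((LinearMap.fst ℂ W Y).comp Q.subtype).comp (LinearMap.snd ℂ P Q)
  have hf : ∀ x, f x = x.1.1.2 - x.2.1.1 := fun x => rfl
  let g : (P × Q) →ₗ[ℂ] (V × Y) :=
    (((LinearMap.fst ℂ V W).comp P.subtype).comp (LinearMap.fst ℂ P Q)).prod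
      (((LinearMap.snd ℂ W Y).comp Q.subtype).comp (LinearMap.snd ℂ P Q))
  have hg : ∀ x, g x = (x.1.1.1, x.2.1.2) := fun x => rfl
  have hsurj : LinearMap.range f = ⊤ := by
    rw [eq_top_iff]
    intro w _
    have hw : w ∈ relIm P ⊔ relDom Q := by rw [hdom]; trivial
    obtain ⟨a, ⟨p, hp, rfl⟩, b, ⟨q, hq, rfl⟩, rfl⟩ := Submodule.mem_sup.1 hw
    refine ⟨(⟨p, hp⟩, -⟨q, hq⟩), ?_⟩
    rw [hf]
    simp
  let h : LinearMap.ker f →ₗ[ℂ] (V × Y) := g.comp (LinearMap.ker f).subtype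
  have hinj : Function.Injective h := by
    rintro ⟨⟨⟨⟨v, w⟩, hp⟩, ⟨⟨w', y⟩, hq⟩⟩, hx⟩ ⟨⟨⟨⟨v₂, w₂⟩, hp₂⟩, ⟨⟨w₂', y₂⟩, hq₂⟩⟩, hx₂⟩ h0
    have h1 : w - w' = 0 := hx
    have h1₂ : w₂ - w₂' = 0 := hx₂
    have h2 : (v, y) = (v₂, y₂) := h0
    obtain rfl : w = w' := sub_eq_zero.1 h1
    obtain rfl : w₂ = w₂' := sub_eq_zero.1 h1₂
    obtain ⟨rfl, rfl⟩ := Prod.mk.inj h2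
    have hP : ((0 : V), w - w₂) ∈ P := by simpa using P.sub_mem hp hp₂
    have hQ : (w - w₂, (0 : Y)) ∈ Q := by simpa using Q.sub_mem hq hq₂
    have hw : w - w₂ ∈ relKer Q ⊓ relIndef P := ⟨hQ, hP⟩
    rw [hker] at hw
    obtain rfl := sub_eq_zero.1 ((Submodule.mem_bot ℂ).1 hw)
    rfl
  have hrange : LinearMap.range h = relComp P Q := by
    ext ⟨v, y⟩
    constructor
    · rintro ⟨⟨⟨⟨⟨v', w⟩, hp⟩, ⟨⟨w', y'⟩, hq⟩⟩, hx⟩, h0⟩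
      have h1 : w - w' = 0 := hx
      obtain rfl : w = w' := sub_eq_zero.1 h1
      have h2 : (v', y') = (v, y) := h0
      obtain ⟨rfl, rfl⟩ := Prod.mk.inj h2
      exact ⟨w, hp, hq⟩
    · rintro ⟨w, hp, hq⟩
      exact ⟨⟨(⟨(v, w), hp⟩, ⟨(w, y), hq⟩), sub_self w⟩, rfl⟩
  have e1 := LinearMap.finrank_range_add_finrank_ker f
  have e2 := LinearMap.finrank_range_of_inj hinj
  rw [hsurj, finrank_top, Module.finrank_prod] at e1
  rw [hrange] at e2
  omega
end

section
/- Let P ≤ V × W and Q ≤ W × Y be maximal isotropic subspaces for the difference forms, and suppose Ker Q ∩ Indef P = 0. Then the composition Q∘P is a maximal isotropic subspace of V × Y: it is isotropic for the form ⟨(v,y),(v′,y′)⟩ = B_V(v,v′) − B_Y(y,y′) and has dimension (dim V + dim Y)/2. (Proposition 4.2: multiplication of morphisms in the Cayley–Klein category CK GD is well defined.) -/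
open Submodule Module

/-- The difference form `⟨(v,w),(v',w')⟩ = B_V(v,v') - B_W(w,w')` on `V × W`. -/
noncomputable def diffForm {V W : Type*} [AddCommGroup V] [Module ℂ V]
    [AddCommGroup W] [Module ℂ W]
    (BV : LinearMap.BilinForm ℂ V) (BW : LinearMap.BilinForm ℂ W) :
    LinearMap.BilinForm ℂ (V × W) :=
  LinearMap.mk₂ ℂ (fun p q => BV p.1 q.1 - BW p.2 q.2)
    (by intro p p' q; simp; ring)
    (by intro c p q; simp; ring)
    (by intro p q q'; simp; ring)
    (by intro c p q; simp; ring)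

/-- A subspace is isotropic for a bilinear form if the form vanishes identically on it. -/
def IsIsotropic {V : Type*} [AddCommGroup V] [Module ℂ V]
    (B : LinearMap.BilinForm ℂ V) (P : Submodule ℂ V) : Prop :=
  ∀ x ∈ P, ∀ y ∈ P, B x y = 0

theorem diffForm_apply' {V W : Type*} [AddCommGroup V] [Module ℂ V]
    [AddCommGroup W] [Module ℂ W]
    (BV : LinearMap.BilinForm ℂ V) (BW : LinearMap.BilinForm ℂ W) (p q : V × W) :
    diffForm BV BW p q = BV p.1 q.1 - BW p.2 q.2 := rfl

theorem mem_of_orthogonal_maximal {V W : Type*}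
    [AddCommGroup V] [Module ℂ V] [FiniteDimensional ℂ V]
    [AddCommGroup W] [Module ℂ W] [FiniteDimensional ℂ W]
    (BV : LinearMap.BilinForm ℂ V) (BW : LinearMap.BilinForm ℂ W)
    (hVs : BV.IsSymm) (hWs : BW.IsSymm)
    (hVn : BV.Nondegenerate) (hWn : BW.Nondegenerate)
    (P : Submodule ℂ (V × W))
    (hPiso : IsIsotropic (diffForm BV BW) P)
    (hPmax : 2 * Module.finrank ℂ P = Module.finrank ℂ V + Module.finrank ℂ W)
    (z : V × W) (hz : ∀ p ∈ P, diffForm BV BW p z = 0) : z ∈ P := by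
  have hs : (diffForm BV BW).IsSymm := by
    refine ⟨fun x y => ?_⟩
    simp [diffForm_apply', hVs.eq x.1 y.1, hWs.eq x.2 y.2]
  have hn : (diffForm BV BW).Nondegenerate := by
    refine hs.isRefl.nondegenerate_iff_separatingLeft.2 ?_
    rintro ⟨a, b⟩ h
    have h1 : a = 0 := hVn.1 a fun y => by simpa [diffForm_apply'] using h (y, 0)
    have h2 : b = 0 := hWn.1 b fun y => by simpa [diffForm_apply'] using h (0, y)
    rw [h1, h2]; rfl
  have hle : P ≤ (diffForm BV BW).orthogonal P := fun x hx y hy => hPiso y hy x hx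
  have hf := LinearMap.BilinForm.finrank_orthogonal hn P
  rw [Module.finrank_prod] at hf
  have he := Submodule.eq_of_le_of_finrank_eq hle (by omega)
  rw [he]
  exact fun p hp => hz p hp

/-- **Proposition 4.2** (composition of morphisms in the Cayley–Klein category CK GD is
well defined). Let `V`, `W`, `Y` be even-dimensional finite-dimensional complex vector
spaces carrying nondegenerate symmetric bilinear forms, and let `P ≤ V × W`, `Q ≤ W × Y`
be maximal isotropic subspaces for the difference forms with `Ker Q ∩ Indef P = 0`.
Then `Q∘P` is a maximal isotropic subspace of `V × Y` for the difference form: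
it is isotropic and has dimension `(dim V + dim Y)/2`. -/
theorem relComp_maximal_isotropic {V W Y : Type*}
    [AddCommGroup V] [Module ℂ V] [FiniteDimensional ℂ V]
    [AddCommGroup W] [Module ℂ W] [FiniteDimensional ℂ W]
    [AddCommGroup Y] [Module ℂ Y] [FiniteDimensional ℂ Y]
    (BV : LinearMap.BilinForm ℂ V) (BW : LinearMap.BilinForm ℂ W)
    (BY : LinearMap.BilinForm ℂ Y)
    (hVs : BV.IsSymm) (hWs : BW.IsSymm) (hYs : BY.IsSymm)
    (hVn : BV.Nondegenerate) (hWn : BW.Nondegenerate) (hYn : BY.Nondegenerate)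
    (hVe : Even (Module.finrank ℂ V)) (hWe : Even (Module.finrank ℂ W))
    (hYe : Even (Module.finrank ℂ Y))
    (P : Submodule ℂ (V × W)) (Q : Submodule ℂ (W × Y))
    (hPiso : IsIsotropic (diffForm BV BW) P)
    (hPmax : 2 * Module.finrank ℂ P = Module.finrank ℂ V + Module.finrank ℂ W)
    (hQiso : IsIsotropic (diffForm BW BY) Q)
    (hQmax : 2 * Module.finrank ℂ Q = Module.finrank ℂ W + Module.finrank ℂ Y)
    (hker : relKer Q ⊓ relIndef P = ⊥) :
    IsIsotropic (diffForm BV BY) (relComp P Q) ∧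
      2 * Module.finrank ℂ (relComp P Q) = Module.finrank ℂ V + Module.finrank ℂ Y := by
  constructor
  · rintro ⟨v, y⟩ ⟨w, h1, h2⟩ ⟨v', y'⟩ ⟨w', h1', h2'⟩
    have a := hPiso _ h1 _ h1'
    have b := hQiso _ h2 _ h2'
    simp only [diffForm_apply'] at a b ⊢
    linear_combination a + b
  · let f : (P × Q) →ₗ[ℂ] W :=
      (LinearMap.snd ℂ V W ∘ₗ P.subtype).coprod (-(LinearMap.fst ℂ W Y ∘ₗ Q.subtype))
    have hf : ∀ x, f x = x.1.1.2 - x.2.1.1 := fun x => by simp [f, sub_eq_add_neg]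
    let g : (P × Q) →ₗ[ℂ] V × Y :=
      (LinearMap.fst ℂ V W ∘ₗ P.subtype).prodMap (LinearMap.snd ℂ W Y ∘ₗ Q.subtype)
    have hg : ∀ x, g x = (x.1.1.1, x.2.1.2) := fun x => rfl
    have hcomp : relComp P Q = (LinearMap.ker f).map g := by
      ext ⟨v, y⟩
      constructor
      · rintro ⟨w, h1, h2⟩
        refine ⟨(⟨(v, w), h1⟩, ⟨(w, y), h2⟩), ?_, rfl⟩
        simp [hf]
      · rintro ⟨⟨⟨⟨v', w⟩, h1⟩, ⟨⟨w', y'⟩, h2⟩⟩, h3, h4⟩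
        simp only [SetLike.mem_coe, LinearMap.mem_ker, hf, sub_eq_zero] at h3
        simp only [hg, Prod.mk.injEq] at h4
        obtain ⟨rfl, rfl⟩ := h4
        subst h3
        exact ⟨w, h1, h2⟩
    have hinj : Function.Injective (g.domRestrict (LinearMap.ker f)) := by
      refine (injective_iff_map_eq_zero _).2 ?_
      rintro ⟨⟨⟨⟨v', w⟩, h1⟩, ⟨⟨w', y'⟩, h2⟩⟩, h3⟩ h4
      have h5 := h3
      simp only [LinearMap.mem_ker, hf, sub_eq_zero] at h5
      simp only [LinearMap.domRestrict_apply, hg, Prod.mk_eq_zero] at h4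
      obtain ⟨rfl, rfl⟩ := h4
      subst h5
      have : w ∈ relKer Q ⊓ relIndef P := ⟨h2, h1⟩
      rw [hker, Submodule.mem_bot] at this
      subst this
      rfl
    have hdim : finrank ℂ (relComp P Q) = finrank ℂ (LinearMap.ker f) := by
      rw [hcomp, ← LinearMap.range_domRestrict]
      exact LinearMap.finrank_range_of_inj hinj
    have horth : BW.orthogonal (LinearMap.range f) = ⊥ := by
      rw [eq_bot_iff]
      intro z hz
      have hz' : ∀ x, BW (f x) z = 0 := fun x => hz _ ⟨x, rfl⟩
      rw [← hker]
      constructor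
      · refine mem_of_orthogonal_maximal BW BY hWs hYs hWn hYn Q hQiso hQmax (z, 0) ?_
        intro q hq
        have := hz' (0, ⟨q, hq⟩)
        simpa [hf, diffForm_apply'] using this
      · refine mem_of_orthogonal_maximal BV BW hVs hWs hVn hWn P hPiso hPmax (0, z) ?_
        intro p hp
        have := hz' (⟨p, hp⟩, 0)
        simpa [hf, diffForm_apply'] using this
    have h1 := LinearMap.BilinForm.finrank_orthogonal hWn (LinearMap.range f)
    rw [horth, finrank_bot] at h1
    have h2 := LinearMap.finrank_range_add_finrank_ker f
    have h3 := Submodule.finrank_le (LinearMap.range f)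
    rw [Module.finrank_prod] at h2
    omega
end

section
/- Let P : V ⇉ W and Q : W ⇉ Y be linear relations between finite-dimensional complex vector spaces. Then the pair (P,Q) is composable if and only if the pair of dual relations (P′,Q′) is composable; explicitly, [Ker Q ∩ Indef P = 0 and Im P + Dom Q = W] holds if and only if [Ker Q′ ∩ Indef P′ = 0 and Im P′ + Dom Q′ = W*]. (Lemma 4.2(d): Q′P′ = null if and only if QP = null.) -/
open Submodule Module

/-- The dual relation `P' : V* ⇉ W*` of a linear relation `P : V ⇉ W`. -/
def relDual {V W : Type*} [AddCommGroup V] [Module ℂ V] [AddCommGroup W] [Module ℂ W]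
    (P : Submodule ℂ (V × W)) : Submodule ℂ (Module.Dual ℂ V × Module.Dual ℂ W) where
  carrier := {fg | ∀ p ∈ P, fg.1 p.1 = fg.2 p.2}
  add_mem' := by
    rintro ⟨f, g⟩ ⟨f', g'⟩ h h' ⟨v, w⟩ hp
    simpa using congrArg₂ (· + ·) (h _ hp) (h' _ hp)
  zero_mem' := by intro p _; simp
  smul_mem' := by
    rintro c ⟨f, g⟩ h ⟨v, w⟩ hp
    simpa using congrArg (c * ·) (h _ hp)

/-- The pair `(P, Q)` of linear relations `P : V ⇉ W`, `Q : W ⇉ Y` is composable if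
`Ker Q ∩ Indef P = 0` and `Im P + Dom Q = W`. -/
def Composable {V W Y : Type*} [AddCommGroup V] [Module ℂ V] [AddCommGroup W] [Module ℂ W]
    [AddCommGroup Y] [Module ℂ Y]
    (P : Submodule ℂ (V × W)) (Q : Submodule ℂ (W × Y)) : Prop :=
  relKer Q ⊓ relIndef P = ⊥ ∧ relIm P ⊔ relDom Q = ⊤

theorem relKer_relDual {V W : Type*} [AddCommGroup V] [Module ℂ V] [AddCommGroup W] [Module ℂ W]
    (P : Submodule ℂ (V × W)) : relKer (relDual P) = (relDom P).dualAnnihilator := by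
  ext f
  rw [Submodule.mem_dualAnnihilator]
  constructor
  · rintro h _ ⟨p, hp, rfl⟩
    simpa using h p hp
  · intro h p hp
    simpa using h p.1 ⟨p, hp, rfl⟩

theorem relIndef_relDual {V W : Type*} [AddCommGroup V] [Module ℂ V] [AddCommGroup W]
    [Module ℂ W] (P : Submodule ℂ (V × W)) :
    relIndef (relDual P) = (relIm P).dualAnnihilator := by
  ext f
  rw [Submodule.mem_dualAnnihilator]
  constructor
  · rintro h _ ⟨p, hp, rfl⟩
    simpa using (h p hp).symm
  · intro h p hp
    simpa using (h p.2 ⟨p, hp, rfl⟩).symm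

theorem relDom_relDual {V W : Type*} [AddCommGroup V] [Module ℂ V] [AddCommGroup W] [Module ℂ W]
    (P : Submodule ℂ (V × W)) : relDom (relDual P) = (relKer P).dualAnnihilator := by
  ext f
  rw [Submodule.mem_dualAnnihilator]
  constructor
  · rintro ⟨⟨f, g⟩, h, rfl⟩ v hv
    simpa using h (v, 0) hv
  · intro h
    have h1 : f ∘ₗ LinearMap.fst ℂ V W ∘ₗ P.subtype ∈
        (LinearMap.ker (LinearMap.snd ℂ V W ∘ₗ P.subtype)).dualAnnihilator := by
      rw [Submodule.mem_dualAnnihilator]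
      rintro ⟨⟨v, w⟩, hp⟩ hk
      obtain rfl : w = 0 := hk
      exact h v hp
    rw [← LinearMap.range_dualMap_eq_dualAnnihilator_ker] at h1
    obtain ⟨g, hg⟩ := h1
    exact ⟨(f, g), fun p hp => (LinearMap.congr_fun hg ⟨p, hp⟩).symm, rfl⟩

theorem relIm_relDual {V W : Type*} [AddCommGroup V] [Module ℂ V] [AddCommGroup W] [Module ℂ W]
    (P : Submodule ℂ (V × W)) : relIm (relDual P) = (relIndef P).dualAnnihilator := by
  ext f
  rw [Submodule.mem_dualAnnihilator]
  constructor
  · rintro ⟨⟨f, g⟩, h, rfl⟩ v hv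
    simpa using (h (0, v) hv).symm
  · intro h
    have h1 : f ∘ₗ LinearMap.snd ℂ V W ∘ₗ P.subtype ∈
        (LinearMap.ker (LinearMap.fst ℂ V W ∘ₗ P.subtype)).dualAnnihilator := by
      rw [Submodule.mem_dualAnnihilator]
      rintro ⟨⟨v, w⟩, hp⟩ hk
      obtain rfl : v = 0 := hk
      exact h w hp
    rw [← LinearMap.range_dualMap_eq_dualAnnihilator_ker] at h1
    obtain ⟨g, hg⟩ := h1
    exact ⟨(g, f), fun p hp => LinearMap.congr_fun hg ⟨p, hp⟩, rfl⟩

/-- **Lemma 4.2(d).** The pair `(P, Q)` of linear relations between finite-dimensional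
complex vector spaces is composable if and only if the pair of dual relations `(P', Q')`
is composable. -/
theorem composable_iff_dual_composable {V W Y : Type*}
    [AddCommGroup V] [Module ℂ V] [FiniteDimensional ℂ V]
    [AddCommGroup W] [Module ℂ W] [FiniteDimensional ℂ W]
    [AddCommGroup Y] [Module ℂ Y] [FiniteDimensional ℂ Y]
    (P : Submodule ℂ (V × W)) (Q : Submodule ℂ (W × Y)) :
    Composable P Q ↔ Composable (relDual P) (relDual Q) := by
  unfold Composable
  rw [relKer_relDual, relIndef_relDual, relDom_relDual, relIm_relDual,
    ← Submodule.dualAnnihilator_sup_eq, ← Subspace.dualAnnihilator_inf_eq,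
    ← Submodule.dualAnnihilator_top, ← Submodule.dualAnnihilator_bot,
    Subspace.dualAnnihilator_inj, Subspace.dualAnnihilator_inj, sup_comm (relDom Q),
    inf_comm (relIndef P), and_comm]
end

section
/- Let P : V ⇉ W and Q : W ⇉ Y be linear relations between finite-dimensional complex vector spaces such that the pair (P,Q) is composable. Then the dual of the composition equals the composition of the duals: (Q∘P)′ = Q′∘P′ as subspaces of V* × Y*. (Lemma 4.2(e).) -/
open Submodule Module

/-- **Lemma 4.2(e).** If the pair `(P, Q)` of linear relations between finite-dimensional
complex vector spaces is composable, then the dual of the composition equals the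
composition of the duals: `(Q∘P)' = Q'∘P'` as subspaces of `V* × Y*`. -/
theorem relDual_relComp {V W Y : Type*}
    [AddCommGroup V] [Module ℂ V] [FiniteDimensional ℂ V]
    [AddCommGroup W] [Module ℂ W] [FiniteDimensional ℂ W]
    [AddCommGroup Y] [Module ℂ Y] [FiniteDimensional ℂ Y]
    (P : Submodule ℂ (V × W)) (Q : Submodule ℂ (W × Y))
    (h : Composable P Q) :
    relDual (relComp P Q) = relComp (relDual P) (relDual Q) := by
  ext ⟨f, k⟩
  constructor
  · intro hfk
    have hfk' : ∀ p ∈ relComp P Q, f p.1 = k p.2 := hfk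
    let φ : (P × Q) →ₗ[ℂ] W :=
      ((LinearMap.snd ℂ V W).comp P.subtype).comp (LinearMap.fst ℂ P Q) -
        ((LinearMap.fst ℂ W Y).comp Q.subtype).comp (LinearMap.snd ℂ P Q)
    let L : Module.Dual ℂ (P × Q) :=
      (f.comp ((LinearMap.fst ℂ V W).comp P.subtype)).comp (LinearMap.fst ℂ P Q) -
        (k.comp ((LinearMap.snd ℂ W Y).comp Q.subtype)).comp (LinearMap.snd ℂ P Q)
    have hL : L ∈ LinearMap.range φ.dualMap := by
      rw [LinearMap.range_dualMap_eq_dualAnnihilator_ker, Submodule.mem_dualAnnihilator]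
      rintro ⟨⟨⟨v, w⟩, hp⟩, ⟨⟨w', y⟩, hq⟩⟩ hker
      have e : w - w' = 0 := hker
      obtain rfl : w = w' := sub_eq_zero.mp e
      exact sub_eq_zero.mpr (hfk' (v, y) ⟨w, hp, hq⟩)
    obtain ⟨g, hg⟩ := hL
    have key : ∀ (p : P) (q : Q), g (p.1.2 - q.1.1) = f p.1.1 - k q.1.2 :=
      fun p q => LinearMap.congr_fun hg (p, q)
    refine ⟨g, ?_, ?_⟩
    · intro p hp
      have := key ⟨p, hp⟩ 0
      simpa using this.symm
    · intro q hq
      have := key 0 ⟨q, hq⟩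
      simpa using this
  · rintro ⟨g, h1, h2⟩ ⟨v, y⟩ ⟨w, hp, hq⟩
    exact (h1 (v, w) hp).trans (h2 (w, y) hq)
end

section
/- Let P : V ⇉ W, Q : W ⇉ Y, and R : Y ⇉ Z be linear relations between finite-dimensional complex vector spaces. Then [(P,Q) is composable and (Q∘P, R) is composable] if and only if [(Q,R) is composable and (P, R∘Q) is composable]; moreover, when these equivalent conditions hold, R∘(Q∘P) = (R∘Q)∘P. (Lemma 4.3: multiplication of morphisms of the category CK GA is associative.) -/
open Submodule Module

/-- Elementwise description of composability. -/
theorem composable_iff_elem {V W Y : Type*} [AddCommGroup V] [Module ℂ V]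
    [AddCommGroup W] [Module ℂ W] [AddCommGroup Y] [Module ℂ Y]
    (P : Submodule ℂ (V × W)) (Q : Submodule ℂ (W × Y)) :
    Composable P Q ↔ (∀ w : W, ((0 : V), w) ∈ P → (w, (0 : Y)) ∈ Q → w = 0) ∧
      (∀ w : W, ∃ v w₁ w₂ y, (v, w₁) ∈ P ∧ (w₂, y) ∈ Q ∧ w₁ + w₂ = w) := by
  unfold Composable
  refine and_congr ?_ ?_
  · rw [Submodule.eq_bot_iff]
    exact ⟨fun h w h1 h2 => h w ⟨h2, h1⟩, fun h w hw => h w hw.2 hw.1⟩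
  · rw [Submodule.eq_top_iff']
    refine forall_congr' fun w => ?_
    rw [Submodule.mem_sup]
    constructor
    · rintro ⟨_, ⟨⟨v, w₁⟩, h1, rfl⟩, _, ⟨⟨w₂, y⟩, h2, rfl⟩, h⟩
      exact ⟨v, w₁, w₂, y, h1, h2, h⟩
    · rintro ⟨v, w₁, w₂, y, h1, h2, h⟩
      exact ⟨w₁, ⟨(v, w₁), h1, rfl⟩, w₂, ⟨(w₂, y), h2, rfl⟩, h⟩

/-- **Lemma 4.3** (associativity of the multiplication of morphisms in the category CK GA).
For linear relations `P : V ⇉ W`, `Q : W ⇉ Y`, `R : Y ⇉ Z` between finite-dimensional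
complex vector spaces: `(P,Q)` and `(Q∘P, R)` are composable iff `(Q,R)` and `(P, R∘Q)` are
composable, and when these equivalent conditions hold `R∘(Q∘P) = (R∘Q)∘P`. -/
theorem relComp_assoc {V W Y Z : Type*}
    [AddCommGroup V] [Module ℂ V] [FiniteDimensional ℂ V]
    [AddCommGroup W] [Module ℂ W] [FiniteDimensional ℂ W]
    [AddCommGroup Y] [Module ℂ Y] [FiniteDimensional ℂ Y]
    [AddCommGroup Z] [Module ℂ Z] [FiniteDimensional ℂ Z]
    (P : Submodule ℂ (V × W)) (Q : Submodule ℂ (W × Y)) (R : Submodule ℂ (Y × Z)) :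
    ((Composable P Q ∧ Composable (relComp P Q) R) ↔
      (Composable Q R ∧ Composable P (relComp Q R))) ∧
    ((Composable P Q ∧ Composable (relComp P Q) R) →
      relComp (relComp P Q) R = relComp P (relComp Q R)) := by
  refine ⟨?_, fun _ => ?_⟩
  · simp only [composable_iff_elem]
    constructor
    · rintro ⟨⟨K1, I1⟩, K2, I2⟩
      refine ⟨⟨fun y h1 h2 => K2 y ⟨0, P.zero_mem, h1⟩ h2, fun y => ?_⟩, ?_, fun w => ?_⟩
      · obtain ⟨v, y1, y2, z, ⟨w, _, hq⟩, hr, e⟩ := I2 y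
        exact ⟨w, y1, y2, z, hq, hr, e⟩
      · rintro w hp ⟨y, hq, hr⟩
        have hy : y = 0 := K2 y ⟨w, hp, hq⟩ hr
        subst hy
        exact K1 w hp hq
      · obtain ⟨v, w1, w2, y, hp, hq, e⟩ := I1 w
        obtain ⟨v', y1, y2, z, ⟨w', hp', hq'⟩, hr, e'⟩ := I2 y
        refine ⟨v + v', w1 + w', w2 - w', z, P.add_mem hp hp', ⟨y2, ?_, hr⟩, ?_⟩
        · have := Q.sub_mem hq hq'
          rw [← e'] at this
          simpa using this
        · rw [← e]; abel
    · rintro ⟨⟨K3, I3⟩, K4, I4⟩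
      refine ⟨⟨fun w h1 h2 => K4 w h1 ⟨0, h2, R.zero_mem⟩, fun w => ?_⟩, ?_, fun y => ?_⟩
      · obtain ⟨v, w1, w2, z, hp, ⟨y, hq, _⟩, e⟩ := I4 w
        exact ⟨v, w1, w2, y, hp, hq, e⟩
      · rintro y ⟨w, hp, hq⟩ hr
        have hw : w = 0 := K4 w hp ⟨y, hq, hr⟩
        subst hw
        exact K3 y hq hr
      · obtain ⟨w, y1, y2, z, hq, hr, e⟩ := I3 y
        obtain ⟨v, w1, w2, z', hp, ⟨y', hq', hr'⟩, e'⟩ := I4 w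
        refine ⟨v, y1 - y', y2 + y', z + z', ⟨w1, hp, ?_⟩, R.add_mem hr hr', ?_⟩
        · have := Q.sub_mem hq hq'
          rw [← e'] at this
          simpa using this
        · rw [← e]; abel
  · ext ⟨v, z⟩
    constructor
    · rintro ⟨y, ⟨w, hp, hq⟩, hr⟩
      exact ⟨w, hp, y, hq, hr⟩
    · rintro ⟨w, hp, y, hq, hr⟩
      exact ⟨y, ⟨w, hp, hq⟩, hr⟩
end
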